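/- Let n ≥ 1 be an integer, let q be a prime power, and let x ∈ F_q^× be an element of multiplicative order o. Then the number of pairs (A, B), where A is a monic polynomial of degree n over F_q, B is a polynomial over F_q of degree strictly less than n, and Res(A, B) = x, equals q^n · Σ_{(a,b,c)} μ(a) · q^{b−1} · g(c), where the sum ranges over all ordered triples (a,b,c) of positive integers with a·b·c = n, and g(c) = gcd(c, q−1) if gcd(c, q−1) divides (q−1)/o, and g(c) = 0 otherwise. -/

import Mathlib

open Polynomial

/-- The resultant `Res(φ, ψ)` of a monic polynomial `φ` and a polynomial `ψ`, computed
(inside the algebraic closure) as the product `∏ ψ(αᵢ)` over the roots `αᵢ` of `φ`,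
counted with multiplicity. -/
noncomputable def resultantAC {k : Type*} [Field k] (φ ψ : k[X]) : AlgebraicClosure k :=
  (((φ.map (algebraMap k (AlgebraicClosure k))).roots).map
    fun α => (ψ.map (algebraMap k (AlgebraicClosure k))).eval α).prod

/-- `Res_n(k)`: the set of pairs `(φ, ψ)` of monic degree-`n` polynomials over `k`
with `Res(φ, ψ) = 1`. -/
def ResPairs (k : Type*) [Field k] (n : ℕ) : Set (k[X] × k[X]) :=
  {p | p.1.Monic ∧ p.1.natDegree = n ∧ p.2.Monic ∧ p.2.natDegree = n ∧
    resultantAC p.1 p.2 = 1}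

/-!
For monic `A`, `Res(A, B)` is the norm of the class of `B` along `F[X] ⧸ (A) → F`. On unit groups
this norm is a homomorphism onto the `e`-th powers of `Fˣ`, where `e` is the gcd of the
multiplicities of the irreducible factors of `A`; hence the number of `B` with `Res(A, B) = x`,
times `|Fˣ|`, is the number of `e`-th roots of `x` times the number of units modulo `A`.

It remains to sum over `A`. By Möbius inversion over the divisors `d` of `e` it suffices to sum the
number of units modulo `A` over the `d`-th powers `A = C ^ d`, that is, to count the coprime pairs
`(C, B)` with `C` monic of degree `m = n / d` and `deg B < n`. Splitting off the monic gcd of an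
arbitrary pair shows that there are `q ^ n * q ^ (m - 1) * (q - 1)` of them.
-/

section Groups

theorem pow_finset_gcd_mem {G ι : Type*} [Group G] (H : Subgroup G) {u : G} (s : Finset ι)
    (m : ι → ℕ) (h : ∀ i ∈ s, u ^ m i ∈ H) : u ^ s.gcd m ∈ H := by
  classical
  induction s using Finset.induction_on with
  | empty => simp
  | insert i s _ ih =>
    have hi := h i (Finset.mem_insert_self i s)
    have hs := ih fun j hj => h j (Finset.mem_insert_of_mem hj)
    rw [Finset.gcd_insert, gcd_eq_nat_gcd, ← zpow_natCast, Nat.gcd_eq_gcd_ab, zpow_add, zpow_mul,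
      zpow_mul, zpow_natCast, zpow_natCast]
    exact H.mul_mem (H.zpow_mem hi _) (H.zpow_mem hs _)

theorem card_fiber_mul_card_range {G K : Type*} [Group G] [Group K] (f : G →* K) {x : K}
    (hx : x ∈ f.range) : Nat.card {u // f u = x} * Nat.card f.range = Nat.card G := by
  obtain ⟨a, rfl⟩ := hx
  have fiberEquivKer : {u // f u = f a} ≃ f.ker :=
    (Equiv.mulLeft a⁻¹).subtypeEquiv fun u => by
      rw [MonoidHom.mem_ker, Equiv.coe_mulLeft, map_mul, map_inv, inv_mul_eq_one, eq_comm]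
  rw [Nat.card_congr fiberEquivKer, ← Subgroup.index_ker, Subgroup.card_mul_index]

theorem card_fiber_eq_zero {α β : Type*} {f : α → β} {x : β} (hx : x ∉ Set.range f) :
    Nat.card {u // f u = x} = 0 := by
  have : IsEmpty {u // f u = x} := ⟨fun u => hx ⟨u.1, u.2⟩⟩
  exact Nat.card_of_isEmpty

theorem card_fiber_mul_card_of_range_eq {G G' K : Type*} [Group G] [Group G'] [Group K]
    {f : G →* K} {f' : G' →* K} (h : f.range = f'.range) (x : K) :
    Nat.card {u // f u = x} * Nat.card G' = Nat.card {u // f' u = x} * Nat.card G := by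
  by_cases hx : x ∈ f.range
  · have hx' : x ∈ f'.range := h ▸ hx
    rw [← card_fiber_mul_card_range f hx, ← card_fiber_mul_card_range f' hx', h]
    ring
  · have hx' : x ∉ f'.range := h ▸ hx
    rw [card_fiber_eq_zero hx, card_fiber_eq_zero hx', zero_mul, zero_mul]

section Cyclic

variable {G : Type*} [CommGroup G] [IsCyclic G] [Finite G] (e : ℕ)

theorem range_powMonoidHom_eq_ker :
    (powMonoidHom e : G →* G).range = (powMonoidHom (Nat.card G / e.gcd (Nat.card G))).ker := by
  have hgcd : e.gcd (Nat.card G) ∣ Nat.card G := Nat.gcd_dvd_right _ _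
  refine Subgroup.eq_of_le_of_card_ge ?_ ?_
  · rintro _ ⟨y, rfl⟩
    rw [MonoidHom.mem_ker, powMonoidHom_apply, powMonoidHom_apply, ← pow_mul,
      ← orderOf_dvd_iff_pow_eq_one, ← Nat.mul_div_assoc _ hgcd,
      Nat.mul_div_right_comm (Nat.gcd_dvd_left _ _)]
    exact (orderOf_dvd_natCard y).mul_left _
  · rw [IsCyclic.card_powMonoidHom_range, IsCyclic.card_powMonoidHom_ker,
      Nat.gcd_eq_right (Nat.div_dvd_of_dvd hgcd), Nat.gcd_comm]

theorem mem_range_powMonoidHom_iff (x : G) :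
    x ∈ (powMonoidHom e : G →* G).range ↔ e.gcd (Nat.card G) ∣ Nat.card G / orderOf x := by
  rw [range_powMonoidHom_eq_ker, MonoidHom.mem_ker, powMonoidHom_apply,
    ← orderOf_dvd_iff_pow_eq_one, Nat.dvd_div_iff_mul_dvd (Nat.gcd_dvd_right _ _),
    Nat.dvd_div_iff_mul_dvd (orderOf_dvd_natCard x), mul_comm]

theorem card_pow_eq (x : G) :
    Nat.card {y : G // y ^ e = x} =
      if e.gcd (Nat.card G) ∣ Nat.card G / orderOf x then e.gcd (Nat.card G) else 0 := by
  split_ifs with h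
  · have hgcd := Nat.gcd_dvd_right e (Nat.card G)
    have hpos : 0 < Nat.card G / e.gcd (Nat.card G) := Nat.div_pos (Nat.le_of_dvd Nat.card_pos hgcd)
      (Nat.gcd_pos_of_pos_right e Nat.card_pos)
    have hfiber := card_fiber_mul_card_range _ ((mem_range_powMonoidHom_iff e x).2 h)
    rw [IsCyclic.card_powMonoidHom_range, Nat.gcd_comm (Nat.card G)] at hfiber
    exact Nat.eq_of_mul_eq_mul_right hpos (hfiber.trans (Nat.mul_div_cancel' hgcd).symm)
  · exact card_fiber_eq_zero (mt (mem_range_powMonoidHom_iff e x).1 h)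

end Cyclic

theorem card_subtype_units {M : Type*} [Monoid M] {p : M → Prop} (hp : ∀ m, p m → IsUnit m) :
    Nat.card {u : Mˣ // p u} = Nat.card {m : M // p m} := by
  refine Nat.card_congr (Equiv.ofBijective (fun u => ⟨u.1, u.2⟩) ⟨?_, ?_⟩)
  · intro u v h
    exact Subtype.ext (Units.ext (congrArg Subtype.val h))
  · rintro ⟨m, hm⟩
    exact ⟨⟨(hp m hm).unit, hm⟩, rfl⟩

end Groups

section Norm

variable {K ι : Type*} [Field K] [IsAlgClosed K] [Fintype ι] [DecidableEq ι] (M : Matrix ι ι K)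

theorem card_roots_charpoly : M.charpoly.roots.card = Fintype.card ι := by
  rw [← (IsAlgClosed.splits _).natDegree_eq_card_roots, M.charpoly_natDegree_eq_dim]

theorem det_add_scalar_eq_prod_roots (a : K) :
    (M + Matrix.scalar ι a).det = (M.charpoly.roots.map (· + a)).prod := by
  have heval := (IsAlgClosed.splits M.charpoly).eval_eq_prod_roots_of_monic M.charpoly_monic (-a)
  rw [Matrix.eval_charpoly, map_neg] at heval
  rw [show M + Matrix.scalar ι a = -(-Matrix.scalar ι a - M) by abel, Matrix.det_neg, heval,
    ← card_roots_charpoly M, ← Multiset.card_map (-a - ·), ← Multiset.prod_map_neg,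
    Multiset.map_map]
  simp only [Function.comp_def, neg_sub, sub_neg_eq_add]

theorem det_aeval_eq_prod_roots (p : K[X]) :
    (aeval M p).det = (M.charpoly.roots.map p.eval).prod := by
  induction IsAlgClosed.splits p using Submonoid.closure_induction with
  | mem p hp =>
    obtain ⟨c, rfl⟩ | ⟨c, rfl⟩ := hp
    · simp [Matrix.algebraMap_eq_diagonal, card_roots_charpoly]
    · simpa [Matrix.algebraMap_eq_diagonal, Pi.algebraMap_def] using
        det_add_scalar_eq_prod_roots M c
  | one => simp
  | mul p q _ _ hp hq =>
    simp only [map_mul, Matrix.det_mul, hp, hq, eval_mul, Multiset.prod_map_mul]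

theorem resultantAC_eq_norm {F : Type*} [Field F] {A : F[X]} (hA : A.Monic) (B : F[X]) :
    resultantAC A B = algebraMap F _ (Algebra.norm F (AdjoinRoot.mk A B)) := by
  let φ := Algebra.ofId F (AlgebraicClosure F)
  let pb := AdjoinRoot.powerBasis hA.ne_zero
  let M := Algebra.leftMulMatrix pb.basis pb.gen
  have hchar : (φ.mapMatrix M).charpoly = A.map (algebraMap F _) := by
    rw [AlgHom.mapMatrix_apply, ← AlgHom.coe_toRingHom, Matrix.charpoly_map, charpoly_leftMulMatrix,
      AdjoinRoot.minpoly_powerBasis_gen_of_monic hA]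
    rfl
  have hB : Algebra.leftMulMatrix pb.basis (AdjoinRoot.mk A B) = aeval M B := by
    rw [← AdjoinRoot.aeval_eq, ← aeval_algHom_apply]
    rfl
  calc resultantAC A B
      = (aeval (φ.mapMatrix M) (B.map (algebraMap F (AlgebraicClosure F)))).det := by
        rw [det_aeval_eq_prod_roots, hchar, resultantAC]
    _ = φ (aeval M B).det := by
        rw [aeval_map_algebraMap, aeval_algHom_apply, AlgHom.map_det]
    _ = _ := by
        rw [Algebra.norm_eq_matrix_det pb.basis, hB]
        rfl

instance norm_isLocalHom {R S : Type*} [CommRing R] [CommRing S] [Algebra R S] [Module.Finite R S]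
    [Module.Free R S] : IsLocalHom (Algebra.norm R : S →* R) := by
  constructor
  intro s hs
  rw [Algebra.norm_apply, ← LinearMap.isUnit_iff_isUnit_det, Module.End.isUnit_iff] at hs
  obtain ⟨t, ht⟩ := hs.surjective 1
  exact IsUnit.of_mul_eq_one t ht

end Norm

section Residues

variable {F : Type*} [Field F] {A : F[X]}

theorem isUnit_mk_iff_isCoprime {R : Type*} [CommRing R] {A B : R[X]} :
    IsUnit (AdjoinRoot.mk A B) ↔ IsCoprime A B := by
  rw [isUnit_iff_exists_inv, (AdjoinRoot.mk_surjective (g := A)).exists]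
  simp only [← map_mul, ← map_one (AdjoinRoot.mk A), AdjoinRoot.mk_eq_mk]
  constructor
  · rintro ⟨C, D, hD⟩
    exact ⟨-D, C, by linear_combination hD⟩
  · rintro ⟨a, b, h⟩
    exact ⟨b, -a, by linear_combination h⟩

theorem card_residues (hA : A.Monic) (p : AdjoinRoot A → Prop) :
    Nat.card {B : F[X] // B.degree < A.natDegree ∧ p (AdjoinRoot.mk A B)} =
      Nat.card {b : AdjoinRoot A // p b} := by
  rw [← degree_eq_natDegree hA.ne_zero]
  refine Nat.card_congr (Equiv.ofBijective (fun B => ⟨AdjoinRoot.mk A B.1, B.2.2⟩) ⟨?_, ?_⟩)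
  · rintro ⟨B, hB, _⟩ ⟨B', hB', _⟩ h
    have hdvd : A ∣ B - B' := AdjoinRoot.mk_eq_mk.1 (congrArg Subtype.val h)
    have hdeg : (B - B').degree < A.degree := (degree_sub_le B B').trans_lt (max_lt hB hB')
    exact Subtype.ext (sub_eq_zero.1 (eq_zero_of_dvd_of_degree_lt hdvd hdeg))
  · rintro ⟨b, hb⟩
    have hmk := AdjoinRoot.mk_leftInverse hA b
    obtain ⟨C, rfl⟩ := AdjoinRoot.mk_surjective b
    rw [AdjoinRoot.modByMonicHom_mk] at hmk
    exact ⟨⟨C %ₘ A, degree_modByMonic_lt C hA, hmk.symm ▸ hb⟩, Subtype.ext hmk⟩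

theorem card_coprime_residues (hA : A.Monic) :
    Nat.card {B : F[X] // B.degree < A.natDegree ∧ IsCoprime A B} =
      Nat.card (AdjoinRoot A)ˣ := by
  simp only [← isUnit_mk_iff_isCoprime]
  rw [card_residues hA IsUnit, ← card_subtype_units fun _ => id]
  exact Nat.card_congr (Equiv.subtypeUnivEquiv Units.isUnit)

theorem card_resultantAC_eq (hA : A.Monic) (x : Fˣ) :
    Nat.card {B : F[X] // B.degree < A.natDegree ∧
        resultantAC A B = algebraMap F (AlgebraicClosure F) x} =
      Nat.card {u : (AdjoinRoot A)ˣ // Units.map (Algebra.norm F) u = x} := by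
  have := hA.finite_adjoinRoot
  have := hA.free_adjoinRoot
  simp only [resultantAC_eq_norm hA, (algebraMap F (AlgebraicClosure F)).injective.eq_iff]
  rw [card_residues hA (Algebra.norm F · = (x : F)), ← card_subtype_units]
  · simp only [Units.ext_iff, Units.coe_map]
  · exact fun b hb => isUnit_of_map_unit (Algebra.norm F) b (hb ▸ x.isUnit)

end Residues

section NormRange

variable {F : Type*} [Field F]

theorem norm_mk_mul {A A' : F[X]} (hA : A.Monic) (hA' : A'.Monic) (B : F[X]) :
    Algebra.norm F (AdjoinRoot.mk (A * A') B) =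
      Algebra.norm F (AdjoinRoot.mk A B) * Algebra.norm F (AdjoinRoot.mk A' B) := by
  apply (algebraMap F (AlgebraicClosure F)).injective
  rw [map_mul, ← resultantAC_eq_norm (hA.mul hA'), ← resultantAC_eq_norm hA,
    ← resultantAC_eq_norm hA']
  have hne := ((hA.mul hA').map (algebraMap F (AlgebraicClosure F))).ne_zero
  rw [Polynomial.map_mul] at hne
  simp only [resultantAC, Polynomial.map_mul, roots_mul hne, Multiset.map_add, Multiset.prod_add]

theorem norm_mk_pow {A : F[X]} (hA : A.Monic) (d : ℕ) (B : F[X]) :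
    Algebra.norm F (AdjoinRoot.mk (A ^ d) B) = Algebra.norm F (AdjoinRoot.mk A B) ^ d := by
  apply (algebraMap F (AlgebraicClosure F)).injective
  rw [map_pow, ← resultantAC_eq_norm (hA.pow d), ← resultantAC_eq_norm hA]
  simp only [resultantAC, Polynomial.map_pow, roots_pow, Multiset.map_nsmul, Multiset.prod_nsmul]

theorem range_unitsMap_norm_pow_le {A : F[X]} (hA : A.Monic) {d : ℕ} (hd : d ≠ 0) :
    (Units.map (Algebra.norm F : AdjoinRoot (A ^ d) →* F)).range ≤
      (powMonoidHom d : Fˣ →* Fˣ).range := by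
  rintro _ ⟨u, rfl⟩
  obtain ⟨B, hB⟩ := AdjoinRoot.mk_surjective u.val
  have hcoprime : IsCoprime A B := by
    rw [← IsCoprime.pow_left_iff (Nat.pos_of_ne_zero hd), ← isUnit_mk_iff_isCoprime, hB]
    exact u.isUnit
  have hunit := (isUnit_mk_iff_isCoprime.2 hcoprime).map (Algebra.norm F)
  refine ⟨hunit.unit, Units.ext ?_⟩
  rw [powMonoidHom_apply, Units.val_pow_eq_pow_val, IsUnit.unit_spec, Units.coe_map, ← hB,
    ← norm_mk_pow hA]

variable [Finite F]

theorem exists_norm_mk_eq {P : F[X]} (hP : Irreducible P) (x : F) :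
    ∃ B, Algebra.norm F (AdjoinRoot.mk P B) = x := by
  have := Fact.mk hP
  have : FiniteDimensional F (AdjoinRoot P) := (AdjoinRoot.powerBasis hP.ne_zero).finite
  have : Finite (AdjoinRoot P) := Module.finite_of_finite F
  obtain ⟨b, hb⟩ := FiniteField.norm_surjective F (AdjoinRoot P) x
  obtain ⟨B, rfl⟩ := AdjoinRoot.mk_surjective b
  exact ⟨B, hb⟩

theorem pow_mem_range_unitsMap_norm {P D : F[X]} (hP : Irreducible P) (hPm : P.Monic)
    (hD : D.Monic) (hPD : IsCoprime P D) (k : ℕ) (x : Fˣ) :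
    x ^ k ∈ (Units.map (Algebra.norm F : AdjoinRoot (P ^ k * D) →* F)).range := by
  have hA := (hPm.pow k).mul hD
  have := hA.finite_adjoinRoot
  have := hA.free_adjoinRoot
  obtain ⟨r, s, hrs⟩ := hPD
  obtain ⟨b, hb⟩ := exists_norm_mk_eq hP (x : F)
  let B := b * (s * D) + r * P
  have hBP : AdjoinRoot.mk P B = AdjoinRoot.mk P b :=
    AdjoinRoot.mk_eq_mk.2 ⟨r - b * r, by linear_combination b * hrs⟩
  have hBD : AdjoinRoot.mk D B = 1 := by
    rw [← map_one (AdjoinRoot.mk D)]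
    exact AdjoinRoot.mk_eq_mk.2 ⟨b * s - s, by linear_combination hrs⟩
  have hnorm : Algebra.norm F (AdjoinRoot.mk (P ^ k * D) B) = ((x ^ k : Fˣ) : F) := by
    rw [norm_mk_mul (hPm.pow k) hD, norm_mk_pow hPm, hBP, hb, hBD, map_one, mul_one,
      Units.val_pow_eq_pow_val]
  have hunit : IsUnit (AdjoinRoot.mk (P ^ k * D) B) :=
    isUnit_of_map_unit (Algebra.norm F) _ (hnorm ▸ (x ^ k).isUnit)
  exact ⟨hunit.unit, Units.ext hnorm⟩

end NormRange

section MultiplicityGCD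

open UniqueFactorizationMonoid

variable {F : Type*} [Field F] {A : F[X]}

open Classical in
/-- The greatest common divisor of the multiplicities of the irreducible factors of `A`, that is,
the largest `e` such that `A` is an `e`-th power up to a unit; it is `0` if `A` is constant. -/
noncomputable def multiplicityGCD (A : F[X]) : ℕ :=
  (normalizedFactors A).toFinset.gcd (normalizedFactors A).count

theorem dvd_multiplicityGCD_iff (hA : A.Monic) {d : ℕ} (hd : d ≠ 0) :
    d ∣ multiplicityGCD A ↔ ∃ C : F[X], C.Monic ∧ C ^ d = A := by
  classical
  constructor
  · intro h
    rw [multiplicityGCD, Finset.dvd_gcd_iff] at h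
    obtain ⟨s, hs⟩ := Multiset.exists_smul_of_dvd_count (normalizedFactors A) (k := d)
      fun P hP => by convert! h P (Multiset.mem_toFinset.2 hP)
    have hmonic : ∀ P ∈ s, P.Monic := fun P hP =>
      ((Polynomial.mem_normalizedFactors_iff hA.ne_zero).1
        (hs ▸ Multiset.mem_nsmul.2 ⟨hd, hP⟩)).2.1
    refine ⟨s.prod, ?_, ?_⟩
    · simpa using monic_multiset_prod_of_monic s id hmonic
    · rw [← Multiset.prod_nsmul, ← hs, prod_normalizedFactors_eq hA.ne_zero, hA.normalize_eq_self]
  · rintro ⟨C, -, rfl⟩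
    refine Finset.dvd_gcd fun P _ => ?_
    rw [normalizedFactors_pow, Multiset.count_nsmul]
    exact dvd_mul_right d _

theorem multiplicityGCD_ne_zero (hA : A.Monic) (hA1 : A.natDegree ≠ 0) :
    multiplicityGCD A ≠ 0 := by
  intro h
  obtain ⟨C, -, hCA⟩ := (dvd_multiplicityGCD_iff hA (Nat.succ_ne_zero A.natDegree)).1
    (h ▸ dvd_zero _)
  have hdeg : A.natDegree.succ * C.natDegree = A.natDegree := by rw [← natDegree_pow, hCA]
  exact hA1 (Nat.eq_zero_of_dvd_of_lt (Dvd.intro _ hdeg) (Nat.lt_succ_self _))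

theorem exists_pow_multiplicityGCD_eq (hA : A.Monic) (hA1 : A.natDegree ≠ 0) :
    ∃ C : F[X], C.Monic ∧ C ^ multiplicityGCD A = A :=
  (dvd_multiplicityGCD_iff hA (multiplicityGCD_ne_zero hA hA1)).1 dvd_rfl

theorem multiplicityGCD_dvd_natDegree (hA : A.Monic) (hA1 : A.natDegree ≠ 0) :
    multiplicityGCD A ∣ A.natDegree := by
  obtain ⟨C, -, hCA⟩ := exists_pow_multiplicityGCD_eq hA hA1
  exact ⟨C.natDegree, by rw [← natDegree_pow, hCA]⟩

open Classical in
theorem exists_eq_pow_count_mul (hA : A.Monic) {P : F[X]} (hP : P ∈ normalizedFactors A) :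
    ∃ D : F[X], D.Monic ∧ IsCoprime P D ∧ P ^ (normalizedFactors A).count P * D = A := by
  obtain ⟨hPirr, hPm, -⟩ := (Polynomial.mem_normalizedFactors_iff hA.ne_zero).1 hP
  have hcount : (normalizedFactors A).count P = multiplicity P A := by
    rw [multiplicity_eq_count_normalizedFactors hPirr hA.ne_zero, hPm.normalize_eq_self]
  have hfin : FiniteMultiplicity P A := .of_not_isUnit hPirr.not_isUnit hA.ne_zero
  obtain ⟨D, hDA, hPD⟩ := hfin.exists_eq_pow_mul_and_not_dvd
  rw [← hcount] at hDA
  exact ⟨D, (hPm.pow _).of_mul_monic_left (hDA ▸ hA), hPirr.coprime_iff_not_dvd.2 hPD, hDA.symm⟩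

theorem range_unitsMap_norm [Finite F] (hA : A.Monic) (hA1 : A.natDegree ≠ 0) :
    (Units.map (Algebra.norm F : AdjoinRoot A →* F)).range =
      (powMonoidHom (multiplicityGCD A) : Fˣ →* Fˣ).range := by
  classical
  apply le_antisymm
  · obtain ⟨C, hC, hCA⟩ := exists_pow_multiplicityGCD_eq hA hA1
    have hle := range_unitsMap_norm_pow_le hC (multiplicityGCD_ne_zero hA hA1)
    rwa [hCA] at hle
  · rintro _ ⟨x, rfl⟩
    refine pow_finset_gcd_mem _ _ _ fun P hP => ?_
    have hP := Multiset.mem_toFinset.1 hP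
    obtain ⟨hPirr, hPm, -⟩ := (Polynomial.mem_normalizedFactors_iff hA.ne_zero).1 hP
    obtain ⟨D, hD, hPD, hDA⟩ := exists_eq_pow_count_mul hA hP
    have hmem := pow_mem_range_unitsMap_norm hPirr hPm hD hPD ((normalizedFactors A).count P) x
    rwa [hDA] at hmem

theorem card_resultantAC_mul_card_units [Finite F] (hA : A.Monic) (hA1 : A.natDegree ≠ 0)
    (x : Fˣ) :
    Nat.card {B : F[X] // B.degree < A.natDegree ∧
        resultantAC A B = algebraMap F (AlgebraicClosure F) x} * Nat.card Fˣ =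
      Nat.card {y : Fˣ // y ^ multiplicityGCD A = x} * Nat.card (AdjoinRoot A)ˣ := by
  rw [card_resultantAC_eq hA]
  exact card_fiber_mul_card_of_range_eq (range_unitsMap_norm hA hA1) x

end MultiplicityGCD

section BoundedDegree

variable {R : Type*} [CommRing R]

theorem finite_degree_lt [Finite R] (n : ℕ) : {B : R[X] | B.degree < n}.Finite :=
  .of_equiv (Fin n → R) ((Equiv.subtypeEquivRight fun _ => mem_degreeLT).symm.trans
    (degreeLTEquiv R n).toEquiv).symm

theorem card_degree_lt (n : ℕ) :
    Nat.card {B : R[X] // B.degree < n} = Nat.card R ^ n := by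
  rw [Nat.card_congr ((Equiv.subtypeEquivRight fun _ => mem_degreeLT).symm.trans
    (degreeLTEquiv R n).toEquiv), Nat.card_fun, Nat.card_fin]

variable [Nontrivial R]

theorem finite_monic_natDegree_eq [Finite R] (n : ℕ) :
    {A : R[X] | A.Monic ∧ A.natDegree = n}.Finite :=
  .of_equiv (Fin n → R) ((monicEquivDegreeLT n).trans (degreeLTEquiv R n).toEquiv).symm

variable (R) in
/-- The finset of monic polynomials of degree `n`. -/
noncomputable def monics [Finite R] (n : ℕ) : Finset R[X] :=
  (finite_monic_natDegree_eq (R := R) n).toFinset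

theorem mem_monics [Finite R] {n : ℕ} {A : R[X]} :
    A ∈ monics R n ↔ A.Monic ∧ A.natDegree = n :=
  Set.Finite.mem_toFinset _

theorem card_monics [Finite R] (n : ℕ) : (monics R n).card = Nat.card R ^ n := by
  rw [monics, ← Nat.card_eq_card_finite_toFinset]
  exact (Nat.card_congr ((monicEquivDegreeLT n).trans (degreeLTEquiv R n).toEquiv)).trans
    (by rw [Nat.card_fun, Nat.card_fin])

theorem card_pairs_eq_sum [Finite R] (m N : ℕ) (Q : R[X] → R[X] → Prop) :
    Nat.card {p : R[X] × R[X] // p.1.Monic ∧ p.1.natDegree = m ∧ p.2.degree < N ∧ Q p.1 p.2} =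
      ∑ A ∈ monics R m, Nat.card {B : R[X] // B.degree < N ∧ Q A B} := by
  have : ∀ A, Finite {B : R[X] // B.degree < N ∧ Q A B} := fun A =>
    ((finite_degree_lt N).subset fun _ hB => hB.1 : {B : R[X] | B.degree < N ∧ Q A B}.Finite)
  rw [← Finset.sum_coe_sort, ← Nat.card_sigma]
  exact Nat.card_congr
    { toFun := fun p => ⟨⟨p.1.1, mem_monics.2 ⟨p.2.1, p.2.2.1⟩⟩, p.1.2, p.2.2.2⟩
      invFun := fun p =>
        ⟨(p.1, p.2), (mem_monics.1 p.1.2).1, (mem_monics.1 p.1.2).2, p.2.2⟩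
      left_inv := fun _ => rfl
      right_inv := fun _ => rfl }

end BoundedDegree

section CoprimePairs

variable {F : Type*} [Field F]

-- If `N < G.natDegree`, the truncated difference is `0` and both sides say `B = 0`.
theorem mul_degree_lt_natCast_iff {R : Type*} [Semiring R] [NoZeroDivisors R] {G : R[X]}
    (hG : G ≠ 0) (B : R[X]) (N : ℕ) : (G * B).degree < N ↔ B.degree < (N - G.natDegree : ℕ) := by
  rcases eq_or_ne B 0 with rfl | hB
  · simp
  · rw [degree_eq_natDegree hB, degree_eq_natDegree (mul_ne_zero hG hB), natDegree_mul hG hB,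
      Nat.cast_lt, Nat.cast_lt]
    omega

theorem exists_monic_mul_isCoprime {A : F[X]} (hA : A.Monic) (B : F[X]) :
    ∃ G A' B' : F[X], G.Monic ∧ A'.Monic ∧ IsCoprime A' B' ∧ G * A' = A ∧ G * B' = B := by
  classical
  have hG : (gcd A B).Monic := by
    rw [← normalize_gcd]
    exact monic_normalize fun h => hA.ne_zero ((gcd_eq_zero_iff A B).1 h).1
  obtain ⟨A', B', hA', hB', hunit⟩ := extract_gcd A B
  refine ⟨gcd A B, A', B', hG, hG.of_mul_monic_left ?_, (gcd_isUnit_iff A' B').1 hunit,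
    hA'.symm, hB'.symm⟩
  rwa [← hA']

theorem dvd_of_mul_eq_mul_of_isCoprime {R : Type*} [CommRing R] {G A B G' A' B' : R}
    (h : IsCoprime A B) (hA : G * A = G' * A') (hB : G * B = G' * B') : G' ∣ G := by
  obtain ⟨s, t, hst⟩ := h
  exact ⟨s * A' + t * B', by linear_combination s * hA + t * hB - G * hst⟩

theorem monic_eq_of_mul_eq_mul_of_isCoprime {R : Type*} [CommRing R] [IsDomain R]
    {G A B G' A' B' : R[X]} (hG : G.Monic) (hG' : G'.Monic) (h : IsCoprime A B)
    (h' : IsCoprime A' B') (hA : G * A = G' * A') (hB : G * B = G' * B') : G = G' :=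
  eq_of_monic_of_associated hG hG' (associated_of_dvd_dvd
    (dvd_of_mul_eq_mul_of_isCoprime h' hA.symm hB.symm) (dvd_of_mul_eq_mul_of_isCoprime h hA hB))

variable (F) in
/-- The pairs `(A, B)` of coprime polynomials with `A` monic of degree `m` and `deg B < N`. -/
def coprimePairs (m N : ℕ) : Set (F[X] × F[X]) :=
  {p | p.1.Monic ∧ p.1.natDegree = m ∧ p.2.degree < N ∧ IsCoprime p.1 p.2}

theorem finite_coprimePairs [Finite F] (m N : ℕ) : (coprimePairs F m N).Finite :=
  ((finite_monic_natDegree_eq m).prod (finite_degree_lt N)).subset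
    fun _ hp => ⟨⟨hp.1, hp.2.1⟩, hp.2.2.1⟩

/-- The map `(G, A, B) ↦ (G * A, G * B)` from the pairs `(A, B)` of coprime polynomials and their
prospective monic gcds `G` to all pairs. -/
noncomputable def mulCoprimePair [Finite F] (m N : ℕ) :
    (Σ k : Fin (m + 1), monics F k × coprimePairs F (m - k) (N - k)) →
      monics F m × {B : F[X] // B.degree < N} :=
  fun ⟨k, G, p⟩ =>
    have hG := mem_monics.1 G.2
    have hA : ((G : F[X]) * p.1.1).Monic ∧ ((G : F[X]) * p.1.1).natDegree = m :=
      ⟨hG.1.mul p.2.1, by rw [hG.1.natDegree_mul p.2.1, hG.2, p.2.2.1]; omega⟩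
    have hB : ((G : F[X]) * p.1.2).degree < N :=
      (mul_degree_lt_natCast_iff hG.1.ne_zero _ _).2 (hG.2.symm ▸ p.2.2.2.1)
    (⟨G * p.1.1, mem_monics.2 hA⟩, ⟨G * p.1.2, hB⟩)

theorem mulCoprimePair_injective [Finite F] (m N : ℕ) :
    Function.Injective (mulCoprimePair (F := F) m N) := by
  rintro ⟨k, ⟨G, hG⟩, ⟨⟨A, B⟩, hp⟩⟩ ⟨k', ⟨G', hG'⟩, ⟨⟨A', B'⟩, hp'⟩⟩ h
  have hA : G * A = G' * A' := congrArg (fun p => (p.1 : F[X])) h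
  have hB : G * B = G' * B' := congrArg (fun p => (p.2 : F[X])) h
  obtain ⟨hGm, hGk⟩ := mem_monics.1 hG
  obtain ⟨hGm', hGk'⟩ := mem_monics.1 hG'
  obtain rfl := monic_eq_of_mul_eq_mul_of_isCoprime hGm hGm' hp.2.2.2 hp'.2.2.2 hA hB
  obtain rfl : k = k' := Fin.ext (hGk.symm.trans hGk')
  obtain rfl := mul_left_cancel₀ hGm.ne_zero hA
  obtain rfl := mul_left_cancel₀ hGm.ne_zero hB
  rfl

theorem mulCoprimePair_surjective [Finite F] (m N : ℕ) :
    Function.Surjective (mulCoprimePair (F := F) m N) := by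
  rintro ⟨⟨A, hA⟩, ⟨B, hB⟩⟩
  obtain ⟨hAm, hAdeg⟩ := mem_monics.1 hA
  obtain ⟨G, A', B', hG, hA', hcop, rfl, rfl⟩ := exists_monic_mul_isCoprime hAm B
  have hdeg : G.natDegree + A'.natDegree = m := by rw [← hG.natDegree_mul hA', hAdeg]
  exact ⟨⟨⟨G.natDegree, by omega⟩, ⟨G, mem_monics.2 ⟨hG, rfl⟩⟩, ⟨(A', B'), hA',
    (Nat.sub_eq_of_eq_add' hdeg.symm).symm, (mul_degree_lt_natCast_iff hG.ne_zero B' N).1 hB,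
    hcop⟩⟩, rfl⟩

theorem sum_card_coprimePairs [Finite F] (m N : ℕ) :
    ∑ k ∈ Finset.range (m + 1), Nat.card F ^ k * Nat.card (coprimePairs F (m - k) (N - k)) =
      Nat.card F ^ (m + N) := by
  have := fun m N => (finite_coprimePairs (F := F) m N).to_subtype
  have hbij := Nat.card_eq_of_bijective _
    ⟨mulCoprimePair_injective (F := F) m N, mulCoprimePair_surjective m N⟩
  have hcard : ∀ n, Nat.card (monics F n) = Nat.card F ^ n := fun n =>
    (Nat.card_eq_card_toFinset _).trans (by rw [Finset.toFinset_coe, card_monics])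
  simp only [Nat.card_sigma, Nat.card_prod, hcard, card_degree_lt, ← pow_add] at hbij
  rw [← hbij, ← Fin.sum_univ_eq_sum_range
    fun k => Nat.card F ^ k * Nat.card (coprimePairs F (m - k) (N - k))]

theorem card_coprimePairs [Finite F] {m N : ℕ} (hm : m ≠ 0) (hN : N ≠ 0) :
    Nat.card (coprimePairs F m N) = Nat.card F ^ (N + (m - 1)) * (Nat.card F - 1) := by
  obtain ⟨m, rfl⟩ := Nat.exists_eq_succ_of_ne_zero hm
  obtain ⟨N, rfl⟩ := Nat.exists_eq_succ_of_ne_zero hN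
  have hsum : Nat.card F * Nat.card F ^ (m + N) + Nat.card (coprimePairs F (m + 1) (N + 1)) =
      Nat.card F ^ (m + 1 + (N + 1)) := by
    rw [← sum_card_coprimePairs (m + 1), Finset.sum_range_succ', ← sum_card_coprimePairs m N,
      Finset.mul_sum]
    simp only [Nat.add_sub_add_right, pow_succ', mul_assoc, pow_zero, one_mul, Nat.sub_zero]
  calc Nat.card (coprimePairs F (m + 1) (N + 1))
      = Nat.card F ^ (m + 1 + (N + 1)) - Nat.card F * Nat.card F ^ (m + N) := by
        rw [← hsum, Nat.add_sub_cancel_left]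
    _ = Nat.card F ^ (N + 1 + m) * (Nat.card F - 1) := by
        rw [Nat.mul_sub_one]
        congr 1 <;> ring

end CoprimePairs

section PerfectPowers

variable {F : Type*} [Field F]

theorem pow_left_injOn_monic {d : ℕ} (hd : d ≠ 0) : Set.InjOn (· ^ d) {C : F[X] | C.Monic} := by
  intro C hC C' hC' h
  exact eq_of_monic_of_associated hC hC' (associated_of_dvd_dvd
    ((IsIntegrallyClosed.pow_dvd_pow_iff hd).1 (dvd_of_eq h))
    ((IsIntegrallyClosed.pow_dvd_pow_iff hd).1 (dvd_of_eq h.symm)))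

theorem card_units_adjoinRoot_pow {C : F[X]} (hC : C.Monic) {d : ℕ} (hd : d ≠ 0) :
    Nat.card (AdjoinRoot (C ^ d))ˣ =
      Nat.card {B : F[X] // B.degree < (d * C.natDegree : ℕ) ∧ IsCoprime C B} := by
  simp only [← card_coprime_residues (hC.pow d), natDegree_pow,
    IsCoprime.pow_left_iff (Nat.pos_of_ne_zero hd)]

theorem sum_card_units_eq_card_coprimePairs [Finite F] {d m : ℕ} (hd : d ≠ 0) :
    ∑ A ∈ monics F (d * m) with d ∣ multiplicityGCD A, Nat.card (AdjoinRoot A)ˣ =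
      Nat.card (coprimePairs F m (d * m)) := by
  calc _ = ∑ C ∈ monics F m, Nat.card (AdjoinRoot (C ^ d))ˣ := by
        refine (Finset.sum_nbij (· ^ d) ?_ ?_ ?_ fun _ _ => rfl).symm
        · intro C hC
          obtain ⟨hCm, rfl⟩ := mem_monics.1 hC
          exact Finset.mem_filter.2 ⟨mem_monics.2 ⟨hCm.pow d, natDegree_pow C d⟩,
            (dvd_multiplicityGCD_iff (hCm.pow d) hd).2 ⟨C, hCm, rfl⟩⟩
        · exact (pow_left_injOn_monic hd).mono fun C hC => (mem_monics.1 hC).1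
        · intro A hA
          obtain ⟨hA, hdvd⟩ := Finset.mem_filter.1 hA
          obtain ⟨hAm, hdeg⟩ := mem_monics.1 hA
          obtain ⟨C, hC, rfl⟩ := (dvd_multiplicityGCD_iff hAm hd).1 hdvd
          rw [natDegree_pow] at hdeg
          exact ⟨C, mem_monics.2 ⟨hC, mul_left_cancel₀ hd hdeg⟩, rfl⟩
    _ = ∑ C ∈ monics F m, Nat.card {B : F[X] // B.degree < (d * m : ℕ) ∧ IsCoprime C B} := by
        refine Finset.sum_congr rfl fun C hC => ?_
        obtain ⟨hCm, rfl⟩ := mem_monics.1 hC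
        exact card_units_adjoinRoot_pow hCm hd
    _ = _ := (card_pairs_eq_sum m (d * m) IsCoprime).symm

theorem sum_card_units_of_dvd_multiplicityGCD [Finite F] {d m : ℕ} (hd : d ≠ 0) (hm : m ≠ 0) :
    ∑ A ∈ monics F (d * m) with d ∣ multiplicityGCD A, Nat.card (AdjoinRoot A)ˣ =
      Nat.card F ^ (d * m) * Nat.card F ^ (m - 1) * Nat.card Fˣ := by
  rw [sum_card_units_eq_card_coprimePairs hd, card_coprimePairs hm (mul_ne_zero hd hm),
    Nat.card_units, pow_add]

end PerfectPowers

section Moebius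

open ArithmeticFunction ArithmeticFunction.Moebius

theorem sum_mul_apply_eq_sum_divisors {R α : Type*} [CommRing R] (s : Finset α) (w : α → R)
    (e : α → ℕ) {n : ℕ} (hn : n ≠ 0) (he : ∀ a ∈ s, e a ∣ n) (f : ArithmeticFunction R) :
    ∑ a ∈ s, w a * f (e a) =
      ∑ d ∈ n.divisors, (∑ a ∈ s with d ∣ e a, w a) * ((μ : ArithmeticFunction R) * f) d := by
  have hf : ∀ a ∈ s, f (e a) =
      ∑ d ∈ n.divisors with d ∣ e a, ((μ : ArithmeticFunction R) * f) d := by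
    intro a ha
    rw [Nat.divisors_filter_dvd_of_dvd hn (he a ha), ← coe_zeta_mul_apply, ← mul_assoc,
      coe_zeta_mul_coe_moebius, one_mul]
  simp only [Finset.sum_mul, Finset.sum_filter, ite_mul, zero_mul]
  rw [Finset.sum_comm]
  refine Finset.sum_congr rfl fun a ha => ?_
  rw [hf a ha, Finset.mul_sum, Finset.sum_filter]

theorem sum_divisorsAntidiagonal_mul_apply {R : Type*} [CommSemiring R] (f : ArithmeticFunction R)
    (g h : ℕ → R) (n : ℕ) :
    ∑ t ∈ n.divisorsAntidiagonal, (f * toArithmeticFunction h) t.1 * g t.2 =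
      ∑ t ∈ n.divisorsAntidiagonal, ∑ y ∈ t.2.divisorsAntidiagonal, f t.1 * g y.1 * h y.2 := by
  have hto : ∀ (k : ℕ → R) {a : ℕ}, a ≠ 0 → toArithmeticFunction k a = k a := fun k a ha => by
    simp [toArithmeticFunction, ha]
  calc _ = (f * toArithmeticFunction h * toArithmeticFunction g) n := by
        rw [mul_apply]
        exact Finset.sum_congr rfl fun t ht => by
          rw [hto g (Nat.ne_zero_of_mem_divisorsAntidiagonal ht).2]
    _ = (f * (toArithmeticFunction g * toArithmeticFunction h)) n := by
        rw [mul_assoc, mul_comm (toArithmeticFunction h)]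
    _ = _ := by
        simp only [mul_apply, Finset.mul_sum]
        refine Finset.sum_congr rfl fun t _ => Finset.sum_congr rfl fun y hy => ?_
        obtain ⟨hy1, hy2⟩ := Nat.ne_zero_of_mem_divisorsAntidiagonal hy
        rw [hto g hy1, hto h hy2, mul_assoc]

theorem sum_card_units_mul {F : Type*} [Field F] [Finite F] {n : ℕ} (hn : n ≠ 0) (g : ℕ → ℤ) :
    ∑ A ∈ monics F n, (Nat.card (AdjoinRoot A)ˣ : ℤ) * g (multiplicityGCD A) =
      Nat.card Fˣ * (Nat.card F ^ n *
        ∑ t ∈ n.divisorsAntidiagonal, ∑ y ∈ t.2.divisorsAntidiagonal,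
          μ t.1 * (Nat.card F : ℤ) ^ (y.1 - 1) * g y.2) := by
  let G := toArithmeticFunction g
  let units (A : F[X]) : ℤ := Nat.card (AdjoinRoot A)ˣ
  have hdvd : ∀ A ∈ monics F n, multiplicityGCD A ∣ n := by
    intro A hA
    obtain ⟨hAm, rfl⟩ := mem_monics.1 hA
    exact multiplicityGCD_dvd_natDegree hAm hn
  have hG : ∀ A ∈ monics F n, G (multiplicityGCD A) = g (multiplicityGCD A) := fun A hA =>
    if_neg (ne_zero_of_dvd_ne_zero hn (hdvd A hA))
  calc ∑ A ∈ monics F n, units A * g (multiplicityGCD A)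
      = ∑ A ∈ monics F n, units A * G (multiplicityGCD A) :=
        Finset.sum_congr rfl fun A hA => by rw [hG A hA]
    _ = ∑ t ∈ n.divisorsAntidiagonal,
          (∑ A ∈ monics F n with t.1 ∣ multiplicityGCD A, units A) * (μ * G) t.1 := by
        rw [sum_mul_apply_eq_sum_divisors _ _ _ hn hdvd, intCoe_int,
          ← Nat.map_div_right_divisors, Finset.sum_map]
        rfl
    _ = Nat.card Fˣ * (Nat.card F ^ n * ∑ t ∈ n.divisorsAntidiagonal,
          (μ * G) t.1 * (Nat.card F : ℤ) ^ (t.2 - 1)) := by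
        rw [Finset.mul_sum, Finset.mul_sum]
        refine Finset.sum_congr rfl fun ⟨d, m⟩ ht => ?_
        obtain ⟨hd, hm⟩ := Nat.ne_zero_of_mem_divisorsAntidiagonal ht
        obtain ⟨rfl, -⟩ := Nat.mem_divisorsAntidiagonal.1 ht
        rw [← Nat.cast_sum, sum_card_units_of_dvd_multiplicityGCD hd hm]
        push_cast
        ring
    _ = _ := by rw [sum_divisorsAntidiagonal_mul_apply μ fun b => (Nat.card F : ℤ) ^ (b - 1)]

end Moebius

/-- for `x ∈ F_q^×` of multiplicative order `o`, the number of pairs `(A, B)`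
with `A` monic of degree `n`, `deg B < n`, and `Res(A, B) = x`, equals
`qⁿ · Σ_{abc = n} μ(a) · q^{b-1} · g(c)`, where `g(c) = gcd(c, q-1)` if
`gcd(c, q-1) ∣ (q-1)/o` and `g(c) = 0` otherwise. -/
theorem stmt_16 (F : Type*) [Field F] [Fintype F] (q : ℕ) (hq : Fintype.card F = q)
    (n : ℕ) (hn : 1 ≤ n) (x : Fˣ) (o : ℕ) (ho : orderOf x = o) :
    (Nat.card {p : F[X] × F[X] // p.1.Monic ∧ p.1.natDegree = n ∧
        p.2.degree < (n : ℕ) ∧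
        resultantAC p.1 p.2 = algebraMap F (AlgebraicClosure F) (x : F)} : ℤ) =
      (q : ℤ) ^ n *
        ∑ t ∈ n.divisorsAntidiagonal, ∑ y ∈ t.2.divisorsAntidiagonal,
          (ArithmeticFunction.moebius t.1) * (q : ℤ) ^ (y.1 - 1) *
            (if Nat.gcd y.2 (q - 1) ∣ (q - 1) / o then (Nat.gcd y.2 (q - 1) : ℤ) else 0) := by
  obtain rfl : Nat.card F = q := Nat.card_eq_fintype_card.trans hq
  subst ho
  have hn0 : n ≠ 0 := Nat.one_le_iff_ne_zero.1 hn
  have hroots : ∀ c, (Nat.card {y : Fˣ // y ^ c = x} : ℤ) =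
      if Nat.gcd c (Nat.card F - 1) ∣ (Nat.card F - 1) / orderOf x then
        (Nat.gcd c (Nat.card F - 1) : ℤ) else 0 := fun c => by
    rw [card_pow_eq, Nat.card_units]
    push_cast
    rfl
  have hunits : (Nat.card Fˣ : ℤ) ≠ 0 := Nat.cast_ne_zero.2 Nat.card_pos.ne'
  apply mul_left_cancel₀ hunits
  simp only [← hroots]
  rw [← sum_card_units_mul hn0 fun c => Nat.card {y : Fˣ // y ^ c = x},
    card_pairs_eq_sum n n fun A B => resultantAC A B = algebraMap F (AlgebraicClosure F) x,
    Nat.cast_sum, Finset.mul_sum]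
  refine Finset.sum_congr rfl fun A hA => ?_
  obtain ⟨hAm, rfl⟩ := mem_monics.1 hA
  have hfiber := card_resultantAC_mul_card_units hAm hn0 x
  rw [mul_comm, mul_comm (Nat.card (AdjoinRoot A)ˣ : ℤ)]
  exact_mod_cast hfiber
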